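/- Let G be a finite simple graph such that every vertex of maximum degree Δ(G) lies on one of a collection of pairwise vertex-disjoint cycles in G. Then for every integer k ≥ 2, AT(G □ C_{2k}) ≤ Δ(G) + 1 = Δ(G □ C_{2k}) − 1; in particular ch(G □ C_{2k}) ≤ Δ(G) + 1. -/

import Mathlib

/-!
Expanding the edges of `G □ C_n` between consecutive copies of `G` turns a coefficient of its graph
polynomial into a sum over cyclic sequences of `n` subsets of `V`, that is, into the trace of a
product of `n` transfer matrices `M_a`, where `a` is the exponent prescribed in a layer.

Choosing the other end of every edge exchanges the coefficients of `F_G` at `f` and at `deg - f` up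
to a global sign, and this gives `M_b = ± M_aᵀ` whenever `a + b = deg + 2`. If the layers of
`G □ C_{2k}` carry the exponents `a` and `b` alternately, the coefficient is therefore
`± tr ((M_a M_aᵀ)^k)`, which vanishes only if `M_a = 0`.

Finally, `M_a ≠ 0` as soon as `F_G` has a monomial `f` with `f ≤ a ≤ f + 2`. As `f ≤ deg ≤ Δ(G)`,
the exponent `a = max (f, deg + 2 - Δ(G))` will do when `Δ(G) ≥ 2`, and then `a, b ≤ Δ(G)`.
-/

open MvPolynomial Finset

/-- An orientation of a simple graph: a finite set of ordered pairs containing,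
for each edge `{u, v}` of `G`, exactly one of `(u, v)` and `(v, u)`. -/
structure GraphOrientation {V : Type*} (G : SimpleGraph V) where
  edges : Finset (V × V)
  adj_of_mem : ∀ e ∈ edges, G.Adj e.1 e.2
  mem_iff_not_swap_mem : ∀ u v : V, G.Adj u v → ((u, v) ∈ edges ↔ (v, u) ∉ edges)

/-- The graph polynomial `∏_{(i,j) ∈ E} (x_j - x_i)` associated to an orientation. -/
noncomputable def graphPoly {V : Type*} {G : SimpleGraph V} (D : GraphOrientation G) :
    MvPolynomial V ℝ :=
  ∏ e ∈ D.edges, (X e.2 - X e.1)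

/-- The outdegree of a vertex in an orientation. -/
def GraphOrientation.outDeg {V : Type*} [DecidableEq V] {G : SimpleGraph V}
    (D : GraphOrientation G) (v : V) : ℕ :=
  (D.edges.filter fun e => e.1 = v).card

/-- `G` is `f`-choosable: any assignment of lists of real colors with `|A_v| ≥ f v`
admits a proper coloring from the lists. -/
def Choosable {V : Type*} (G : SimpleGraph V) (f : V → ℕ) : Prop :=
  ∀ A : V → Finset ℝ, (∀ v, f v ≤ (A v).card) →
    ∃ c : V → ℝ, (∀ v, c v ∈ A v) ∧ ∀ u v : V, G.Adj u v → c u ≠ c v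

/-- The list chromatic number. -/
noncomputable def chNumber {V : Type*} (G : SimpleGraph V) : ℕ :=
  sInf {m | Choosable G fun _ => m}

/-- The Alon–Tarsi number: the least `k` such that the graph polynomial has a
monomial `x^d` with nonzero coefficient and `max_v d_v = k - 1`. -/
noncomputable def ATNumber {V : Type*} (G : SimpleGraph V) : ℕ :=
  sInf {k | ∃ (D : GraphOrientation G) (d : V →₀ ℕ),
    MvPolynomial.coeff d (graphPoly D) ≠ 0 ∧ d.support.sup d + 1 = k}

instance {α β : Type*} {G : SimpleGraph α} {H : SimpleGraph β}
    [DecidableEq α] [DecidableEq β] [DecidableRel G.Adj] [DecidableRel H.Adj] :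
    DecidableRel (G.boxProd H).Adj :=
  fun _ _ => decidable_of_iff _ SimpleGraph.boxProd_adj.symm

/-! ### Traces of matrix products -/

section Trace

lemma prod_ofFn_ite_even {M : Type*} [Monoid M] (x y : M) (k : ℕ) :
    (List.ofFn fun i : Fin (2 * k) => if Even (i : ℕ) then x else y).prod = (x * y) ^ k := by
  induction k with
  | zero => simp
  | succ k ih =>
    change (List.ofFn fun i : Fin (2 * k + 1 + 1) => if Even (i : ℕ) then x else y).prod = _
    simp only [List.ofFn_succ, List.prod_cons, Fin.val_zero, Fin.val_succ, Nat.even_add_one,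
      Even.zero, not_true_eq_false, not_not, if_true, if_false, ih, pow_succ', mul_assoc]

variable {ι R : Type*} [Fintype ι] [DecidableEq ι] [CommSemiring R]

lemma prod_ofFn_apply {n : ℕ} (M : Fin (n + 1) → Matrix ι ι R) (s t : ι) :
    (List.ofFn M).prod s t =
      ∑ p : Fin n → ι, ∏ i, M i (Fin.cons (α := fun _ => ι) s p i)
        (Fin.snoc (α := fun _ => ι) p t i) := by
  induction n generalizing s with
  | zero => simp [Fin.snoc]
  | succ n ih =>
    rw [List.ofFn_succ, List.prod_cons, Matrix.mul_apply,
      ← (Fin.consEquiv fun _ : Fin (n + 1) => ι).sum_comp, Fintype.sum_prod_type]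
    refine sum_congr rfl fun r _ => ?_
    rw [ih, mul_sum]
    refine sum_congr rfl fun p _ => ?_
    change _ = ∏ i, M i (Fin.cons (α := fun _ => ι) s (Fin.cons r p) i)
      (Fin.snoc (α := fun _ => ι) (Fin.cons r p) t i)
    simp only [← Fin.cons_snoc_eq_snoc_cons, Fin.prod_univ_succ (n := n + 1), Fin.cons_zero,
      Fin.cons_succ]

lemma trace_prod_ofFn {n : ℕ} (hn : n ≠ 0) (M : Fin n → Matrix ι ι R) :
    (List.ofFn M).prod.trace = ∑ p : Fin n → ι, ∏ i, M i (p i) (p (finRotate n i)) := by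
  obtain ⟨n, rfl⟩ := Nat.exists_eq_succ_of_ne_zero hn
  rw [← (Fin.consEquiv fun _ : Fin (n + 1) => ι).sum_comp, Fintype.sum_prod_type]
  simp only [Matrix.trace, Matrix.diag, prod_ofFn_apply, Fin.snoc_eq_cons_rotate,
    Fin.consEquiv_apply]

lemma pow_succ_ne_zero_of_isHermitian {α : Type*} [Ring α] [PartialOrder α] [StarRing α]
    [StarOrderedRing α] [NoZeroDivisors α] {A : Matrix ι ι α} (hA : A.IsHermitian) (h0 : A ≠ 0)
    (k : ℕ) : A ^ (k + 1) ≠ 0 := by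
  induction k with
  | zero => simpa using h0
  | succ k ih =>
    refine fun h => ih (Matrix.self_mul_conjTranspose_eq_zero.1 ?_)
    rw [(hA.pow _).eq, ← pow_add, show k + 1 + (k + 1) = k + 1 + 1 + k by ring, pow_add, h,
      zero_mul]

open scoped ComplexOrder in
lemma trace_pow_mul_conjTranspose_ne_zero {𝕜 : Type*} [RCLike 𝕜] {N : Matrix ι ι 𝕜} (hN : N ≠ 0)
    (k : ℕ) : ((N * N.conjTranspose) ^ (k + 1)).trace ≠ 0 := by
  have hpos := Matrix.posSemidef_self_mul_conjTranspose N
  rw [Ne, (hpos.pow _).trace_eq_zero_iff]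
  exact pow_succ_ne_zero_of_isHermitian hpos.isHermitian
    (mt Matrix.self_mul_conjTranspose_eq_zero.1 hN) k

end Trace

/-! ### Exponents and coefficients -/

section Exponents

variable {V : Type*}

/-- The exponent of the squarefree monomial `∏ v ∈ S, X v`. -/
noncomputable def indicatorExp (S : Finset V) : V →₀ ℕ := ∑ v ∈ S, Finsupp.single v 1

lemma indicatorExp_apply [DecidableEq V] (S : Finset V) (v : V) :
    indicatorExp S v = if v ∈ S then 1 else 0 := by
  simp [indicatorExp, Finsupp.finsetSum_apply, Finsupp.single_apply]

lemma degree_indicatorExp (S : Finset V) : (indicatorExp S).degree = #S := by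
  simp [indicatorExp, map_sum]

lemma monomial_indicatorExp {R : Type*} [CommSemiring R] (S : Finset V) :
    (monomial (indicatorExp S) 1 : MvPolynomial V R) = ∏ v ∈ S, X v := by
  rw [indicatorExp, monomial_sum_one]; rfl

variable {ι : Type*} [Fintype ι]

/-- The exponent on `V × ι` that is `d i` on the layer `V × {i}`. -/
noncomputable def stackExp (d : ι → V →₀ ℕ) : V × ι →₀ ℕ :=
  ∑ i, (d i).mapDomain (·, i)

lemma stackExp_apply (d : ι → V →₀ ℕ) (v : V) (i : ι) : stackExp d (v, i) = d i v := by
  rw [stackExp, Finsupp.finsetSum_apply, sum_eq_single i]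
  · exact Finsupp.mapDomain_apply (Prod.mk_left_injective i) _ _
  · rintro j - hj
    refine Finsupp.mapDomain_of_notMem_range _ _ ?_
    rintro ⟨u, hu⟩
    exact hj (congrArg Prod.snd hu)
  · simp

lemma stackExp_injective : Function.Injective (stackExp : (ι → V →₀ ℕ) → V × ι →₀ ℕ) := by
  intro d d' h
  ext i v
  rw [← stackExp_apply d, h, stackExp_apply]

lemma coeff_stackExp_prod_rename {R : Type*} [CommSemiring R] (P : ι → MvPolynomial V R)
    (d : ι → V →₀ ℕ) :
    coeff (stackExp d) (∏ i, rename (·, i) (P i)) = ∏ i, coeff (d i) (P i) := by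
  classical
  have hrename (i : ι) : rename (·, i) (P i) =
      ∑ m ∈ (P i).support, monomial (m.mapDomain (·, i)) (coeff m (P i)) := by
    conv_lhs => rw [(P i).as_sum]
    simp only [map_sum, rename_monomial]
  have hexpand : ∏ i, rename (·, i) (P i) = ∑ q ∈ Fintype.piFinset fun i => (P i).support,
      monomial (stackExp q) (∏ i, coeff (q i) (P i)) := by
    simp only [hrename, prod_univ_sum, stackExp, monomial_sum_prod]
  simp_rw [hexpand, coeff_sum, coeff_monomial, stackExp_injective.eq_iff]
  rw [sum_ite_eq', ite_eq_left_iff]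
  intro hd
  simp only [Fintype.mem_piFinset, not_forall, notMem_support_iff] at hd
  obtain ⟨i, hi⟩ := hd
  exact (prod_eq_zero (mem_univ i) hi).symm

end Exponents

/-! ### Orientations and graph polynomials -/

section GraphPoly

variable {V : Type*} {G : SimpleGraph V}

lemma exists_graphOrientation [Finite V] (G : SimpleGraph V) : Nonempty (GraphOrientation G) := by
  classical
  have := Fintype.ofFinite V
  let φ := Fintype.equivFin V
  refine ⟨⟨{e | G.Adj e.1 e.2 ∧ φ e.1 < φ e.2}, fun e he => (mem_filter_univ e).1 he |>.1, ?_⟩⟩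
  intro u v huv
  have hne : φ u ≠ φ v := φ.injective.ne huv.ne
  simp only [mem_filter_univ, huv, huv.symm, true_and, not_lt, hne.le_iff_lt]

lemma GraphOrientation.outDeg_add_card_filter_snd_eq [Fintype V] [DecidableEq V]
    [DecidableRel G.Adj] (D : GraphOrientation G) (v : V) :
    D.outDeg v + #{e ∈ D.edges | e.2 = v} = G.degree v := by
  rw [← G.card_neighborFinset_eq_degree,
    ← card_filter_add_card_filter_not (s := G.neighborFinset v) fun u => (v, u) ∈ D.edges]
  congr 1
  · refine card_nbij' Prod.snd (v, ·) ?_ ?_ ?_ ?_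
    · rintro ⟨x, y⟩ h
      obtain ⟨he, rfl⟩ := mem_filter.1 h
      simpa [he] using D.adj_of_mem _ he
    · intro u hu
      simpa using (mem_filter.1 hu).2
    · rintro ⟨x, y⟩ h
      simpa [eq_comm] using (mem_filter.1 h).2
    · exact fun _ _ => rfl
  · refine card_nbij' Prod.fst (·, v) ?_ ?_ ?_ ?_
    · rintro ⟨x, y⟩ h
      obtain ⟨he, rfl⟩ := mem_filter.1 h
      have hadj := D.adj_of_mem _ he
      simpa [(D.mem_iff_not_swap_mem _ _ hadj).1 he] using hadj.symm
    · intro u hu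
      obtain ⟨hadj, hnot⟩ := mem_filter.1 hu
      rw [SimpleGraph.mem_neighborFinset] at hadj
      simpa using (D.mem_iff_not_swap_mem _ _ hadj.symm).2 hnot
    · rintro ⟨x, y⟩ h
      simpa [eq_comm] using (mem_filter.1 h).2
    · exact fun _ _ => rfl

lemma graphPoly_ne_zero (D : GraphOrientation G) : graphPoly D ≠ 0 :=
  prod_ne_zero_iff.2 fun e he h =>
    (D.adj_of_mem e he).ne (X_injective (R := ℝ) (sub_eq_zero.1 h)).symm

lemma graphPoly_isHomogeneous (D : GraphOrientation G) :
    (graphPoly D).IsHomogeneous #D.edges := by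
  simpa [graphPoly] using IsHomogeneous.prod D.edges (fun e => (X e.2 - X e.1 : MvPolynomial V ℝ))
    (fun _ => 1) fun e _ => (isHomogeneous_X ℝ e.2).sub (isHomogeneous_X ℝ e.1)

lemma degree_eq_of_coeff_monomial_mul_graphPoly_ne_zero (D : GraphOrientation G) {w f : V →₀ ℕ}
    (h : coeff f (monomial w 1 * graphPoly D) ≠ 0) : f.degree = w.degree + #D.edges := by
  by_contra hne
  exact h (((isHomogeneous_monomial 1 rfl).mul (graphPoly_isHomogeneous D)).coeff_eq_zero hne)

/-- The exponent of the term in the expansion of `graphPoly D` that takes the variable of the head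
of each arc in `O` and of the tail of each other arc. -/
noncomputable def GraphOrientation.choiceExp [DecidableEq V] (D : GraphOrientation G)
    (O : Finset (V × V)) : V →₀ ℕ :=
  ∑ e ∈ O, Finsupp.single e.2 1 + ∑ e ∈ D.edges \ O, Finsupp.single e.1 1

lemma GraphOrientation.choiceExp_add_choiceExp_sdiff [Fintype V] [DecidableEq V]
    [DecidableRel G.Adj] (D : GraphOrientation G) {O : Finset (V × V)} (hO : O ⊆ D.edges) (v : V) :
    D.choiceExp O v + D.choiceExp (D.edges \ O) v = G.degree v := by
  have hsum : D.choiceExp O + D.choiceExp (D.edges \ O) =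
      ∑ e ∈ D.edges, Finsupp.single e.1 1 + ∑ e ∈ D.edges, Finsupp.single e.2 1 := by
    rw [choiceExp, choiceExp, Finset.sdiff_sdiff_eq_self hO, ← sum_sdiff hO,
      ← sum_sdiff hO (f := fun e => Finsupp.single e.2 1)]
    abel
  rw [← D.outDeg_add_card_filter_snd_eq, ← Finsupp.add_apply, hsum]
  simp only [outDeg, Finsupp.add_apply, Finsupp.finsetSum_apply, Finsupp.single_apply, card_filter]

lemma graphPoly_eq_sum_choiceExp [DecidableEq V] (D : GraphOrientation G) :
    graphPoly D = ∑ O ∈ D.edges.powerset, monomial (D.choiceExp O) ((-1) ^ #(D.edges \ O)) := by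
  simp_rw [graphPoly, sub_eq_add_neg, prod_add]
  refine sum_congr rfl fun O _ => ?_
  rw [GraphOrientation.choiceExp, ← one_mul ((-1 : ℝ) ^ _), ← monomial_mul, monomial_sum_one,
    monomial_sum_index, prod_neg]
  simp [X]

lemma coeff_monomial_mul_graphPoly [DecidableEq V] (D : GraphOrientation G) (w f : V →₀ ℕ) :
    coeff f (monomial w 1 * graphPoly D) =
      ∑ O ∈ D.edges.powerset, if w + D.choiceExp O = f then (-1) ^ #(D.edges \ O) else 0 := by
  simp only [graphPoly_eq_sum_choiceExp, mul_sum, coeff_sum, monomial_mul, coeff_monomial, one_mul]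

lemma le_degree_of_coeff_graphPoly_ne_zero [Fintype V] [DecidableRel G.Adj]
    (D : GraphOrientation G) {f : V →₀ ℕ} (hf : coeff f (graphPoly D) ≠ 0) (v : V) :
    f v ≤ G.degree v := by
  classical
  rw [graphPoly_eq_sum_choiceExp, coeff_sum] at hf
  obtain ⟨O, hO, hne⟩ := exists_ne_zero_of_sum_ne_zero hf
  rw [coeff_monomial, Ne, ite_eq_right_iff, Classical.not_imp] at hne
  rw [← D.choiceExp_add_choiceExp_sdiff (mem_powerset.1 hO), hne.1]
  exact Nat.le_add_right _ _

/-- Taking the other end of every edge is a bijection between the terms with exponent `f` and those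
with exponent `g`. -/
lemma coeff_monomial_mul_graphPoly_eq_neg_one_pow_mul [Fintype V] [DecidableRel G.Adj]
    (D : GraphOrientation G) {w w' f g : V →₀ ℕ}
    (h : ∀ v, w v + w' v + G.degree v = f v + g v) :
    coeff g (monomial w' 1 * graphPoly D) =
      (-1) ^ #D.edges * coeff f (monomial w 1 * graphPoly D) := by
  classical
  rw [coeff_monomial_mul_graphPoly, coeff_monomial_mul_graphPoly, mul_sum]
  refine sum_nbij' (D.edges \ ·) (D.edges \ ·) (fun _ _ => mem_powerset.2 sdiff_subset)
    (fun _ _ => mem_powerset.2 sdiff_subset)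
    (fun _ hO => Finset.sdiff_sdiff_eq_self (mem_powerset.1 hO))
    (fun _ hO => Finset.sdiff_sdiff_eq_self (mem_powerset.1 hO)) fun O hO => ?_
  rw [mem_powerset] at hO
  have hiff : w' + D.choiceExp O = g ↔ w + D.choiceExp (D.edges \ O) = f := by
    simp only [Finsupp.ext_iff, Finsupp.add_apply]
    refine forall_congr' fun v => ?_
    have hdeg := D.choiceExp_add_choiceExp_sdiff hO v
    have hv := h v
    omega
  have hsign : (-1 : ℝ) ^ #(D.edges \ O) = (-1) ^ #D.edges * (-1) ^ #O := by
    rw [← card_sdiff_add_card_eq_card hO, pow_add, mul_assoc, ← mul_pow]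
    simp
  simp only [hiff, hsign, Finset.sdiff_sdiff_eq_self hO, mul_ite, mul_zero]

end GraphPoly

/-! ### The Alon–Tarsi number -/

section AlonTarsi

variable {V : Type*} {G : SimpleGraph V}

lemma ATNumber_le_of_coeff_graphPoly_ne_zero (D : GraphOrientation G) {d : V →₀ ℕ}
    (hd : coeff d (graphPoly D) ≠ 0) {m : ℕ} (hm : ∀ v, d v ≤ m) : ATNumber G ≤ m + 1 :=
  calc ATNumber G ≤ d.support.sup d + 1 := Nat.sInf_le ⟨D, d, hd, rfl⟩
    _ ≤ m + 1 := Nat.succ_le_succ (Finset.sup_le fun v _ => hm v)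

lemma exists_coeff_graphPoly_ne_zero_lt_ATNumber [Finite V] (G : SimpleGraph V) :
    ∃ (D : GraphOrientation G) (d : V →₀ ℕ),
      coeff d (graphPoly D) ≠ 0 ∧ ∀ v, d v < ATNumber G := by
  obtain ⟨D₀⟩ := exists_graphOrientation G
  obtain ⟨d₀, hd₀⟩ := ne_zero_iff.1 (graphPoly_ne_zero D₀)
  obtain ⟨D, d, hd, hAT⟩ := Nat.sInf_mem
    (s := {k | ∃ (D : GraphOrientation G) (d : V →₀ ℕ),
      coeff d (graphPoly D) ≠ 0 ∧ d.support.sup d + 1 = k}) ⟨_, D₀, d₀, hd₀, rfl⟩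
  refine ⟨D, d, hd, fun v => ?_⟩
  rw [ATNumber, ← hAT, Nat.lt_succ_iff]
  by_cases hv : v ∈ d.support
  · exact le_sup hv
  · simp [Finsupp.notMem_support_iff.1 hv]

lemma eval_graphPoly_ne_zero_iff (D : GraphOrientation G) (c : V → ℝ) :
    eval c (graphPoly D) ≠ 0 ↔ ∀ u v, G.Adj u v → c u ≠ c v := by
  simp only [graphPoly, map_prod, prod_ne_zero_iff, map_sub, eval_X, sub_ne_zero]
  constructor
  · intro h u v huv
    by_cases he : (u, v) ∈ D.edges
    · exact (h _ he).symm
    · exact h _ ((D.mem_iff_not_swap_mem v u huv.symm).2 he)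
  · exact fun h e he => (h _ _ (D.adj_of_mem e he)).symm

lemma choosable_of_coeff_graphPoly_ne_zero [Finite V] (D : GraphOrientation G) {d : V →₀ ℕ}
    (hd : coeff d (graphPoly D) ≠ 0) {f : V → ℕ} (hf : ∀ v, d v < f v) : Choosable G f := by
  intro A hA
  have hdeg : (graphPoly D).totalDegree = d.degree := by
    rw [(graphPoly_isHomogeneous D).totalDegree (graphPoly_ne_zero D)]
    by_contra h
    exact hd ((graphPoly_isHomogeneous D).coeff_eq_zero (Ne.symm h))
  obtain ⟨c, hcA, hc⟩ := combinatorial_nullstellensatz_exists_eval_nonzero (graphPoly D) d hd hdeg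
    A fun v => (hf v).trans_le (hA v)
  exact ⟨c, hcA, (eval_graphPoly_ne_zero_iff D c).1 hc⟩

theorem chNumber_le_ATNumber [Finite V] (G : SimpleGraph V) : chNumber G ≤ ATNumber G := by
  obtain ⟨D, d, hd, hlt⟩ := exists_coeff_graphPoly_ne_zero_lt_ATNumber G
  exact Nat.sInf_le (choosable_of_coeff_graphPoly_ne_zero D hd hlt)

end AlonTarsi

/-! ### Orientations of cycles and box products -/

section BoxProd

/-- The cyclic orientation `0 → 1 → ⋯ → n - 1 → 0` of `C_n`. -/
def cycleOrientation (n : ℕ) (hn : 3 ≤ n) : GraphOrientation (SimpleGraph.cycleGraph n) where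
  edges := univ.image fun i => (i, finRotate n i)
  adj_of_mem := by
    obtain ⟨n, rfl⟩ := Nat.exists_eq_add_of_le' hn
    simp [SimpleGraph.cycleGraph_adj]
  mem_iff_not_swap_mem := by
    obtain ⟨n, rfl⟩ := Nat.exists_eq_add_of_le' hn
    have hne (i : Fin (n + 3)) : i + 1 + 1 ≠ i := by
      rw [add_assoc, Ne, add_eq_left]
      exact ne_of_beq_false rfl
    intro i j hij
    rw [SimpleGraph.cycleGraph_adj, sub_eq_iff_eq_add', sub_eq_iff_eq_add'] at hij
    rcases hij with rfl | rfl <;> simp [hne]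

lemma graphPoly_cycleOrientation {n : ℕ} (hn : 3 ≤ n) :
    graphPoly (cycleOrientation n hn) = ∏ i, (X (finRotate n i) - X i) :=
  prod_image fun _ _ _ _ h => congrArg Prod.fst h

variable {V W : Type*} [Fintype V] [DecidableEq V] [Fintype W] [DecidableEq W]
  {G : SimpleGraph V} {H : SimpleGraph W}

/-- The orientation of `G □ H` that orients each copy of `G` and of `H` in the given way. -/
def GraphOrientation.boxProd (D : GraphOrientation G) (D' : GraphOrientation H) :
    GraphOrientation (G.boxProd H) where
  edges := {e | (e.1.1, e.2.1) ∈ D.edges ∧ e.1.2 = e.2.2 ∨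
    (e.1.2, e.2.2) ∈ D'.edges ∧ e.1.1 = e.2.1}
  adj_of_mem e he :=
    ((mem_filter_univ e).1 he).imp (And.imp_left (D.adj_of_mem _)) (And.imp_left (D'.adj_of_mem _))
  mem_iff_not_swap_mem := by
    rintro ⟨v, w⟩ ⟨v', w'⟩ (⟨hadj, rfl : w = w'⟩ | ⟨hadj, rfl : v = v'⟩)
    · simp [D.mem_iff_not_swap_mem _ _ hadj, hadj.ne, hadj.ne']
    · simp [D'.mem_iff_not_swap_mem _ _ hadj, hadj.ne, hadj.ne']

lemma graphPoly_boxProd (D : GraphOrientation G) (D' : GraphOrientation H) :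
    graphPoly (D.boxProd D') =
      (∏ w, rename (·, w) (graphPoly D)) * ∏ v, rename (v, ·) (graphPoly D') := by
  let edgesG : Finset ((V × W) × V × W) := {e | (e.1.1, e.2.1) ∈ D.edges ∧ e.1.2 = e.2.2}
  let edgesH : Finset ((V × W) × V × W) := {e | (e.1.2, e.2.2) ∈ D'.edges ∧ e.1.1 = e.2.1}
  have hdisj : Disjoint edgesG edgesH :=
    disjoint_filter.2 fun e _ h h' => (D.adj_of_mem _ h.1).ne h'.2
  have hedges : (D.boxProd D').edges = edgesG ∪ edgesH := filter_or _ _ _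
  rw [graphPoly, hedges, prod_union hdisj]
  simp only [graphPoly, map_prod, map_sub, rename_X]
  congr 1
  · rw [← prod_product']
    refine prod_nbij' (fun e => (e.1.2, e.1.1, e.2.1)) (fun q => ((q.2.1, q.1), (q.2.2, q.1)))
      ?_ ?_ ?_ ?_ ?_ <;> aesop
  · rw [← prod_product']
    refine prod_nbij' (fun e => (e.1.1, e.1.2, e.2.2)) (fun q => ((q.1, q.2.1), (q.1, q.2.2)))
      ?_ ?_ ?_ ?_ ?_ <;> aesop

lemma maxDegree_boxProd [Nonempty V] [Nonempty W] [DecidableRel G.Adj] [DecidableRel H.Adj] :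
    (G.boxProd H).maxDegree = G.maxDegree + H.maxDegree := by
  apply le_antisymm
  · refine SimpleGraph.maxDegree_le_of_forall_degree_le _ _ fun x => ?_
    rw [SimpleGraph.degree_boxProd]
    exact add_le_add (G.degree_le_maxDegree _) (H.degree_le_maxDegree _)
  · obtain ⟨v, hv⟩ := G.exists_maximal_degree_vertex
    obtain ⟨w, hw⟩ := H.exists_maximal_degree_vertex
    have hvw := (G.boxProd H).degree_le_maxDegree (v, w)
    rwa [SimpleGraph.degree_boxProd, ← hv, ← hw] at hvw

lemma maxDegree_cycleGraph {n : ℕ} (hn : 3 ≤ n) : (SimpleGraph.cycleGraph n).maxDegree = 2 := by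
  obtain ⟨n, rfl⟩ := Nat.exists_eq_add_of_le' hn
  exact SimpleGraph.IsRegularOfDegree.maxDegree_eq _ fun _ => SimpleGraph.cycleGraph_degree_three_le

end BoxProd

/-! ### Transfer matrices -/

section Transfer

variable {V : Type*} [Fintype V] [DecidableEq V] {G : SimpleGraph V}

/-- The transfer matrix of a copy of `G` in `G □ C_n` with prescribed exponent `a`. The index `S` is
the set of vertices at which the edge from the preceding copy contributes the variable of this copy,
and `T` the set of those at which the edge to the next copy contributes the variable of the next
copy; the sign is that of the remaining choices `-X v` for `v ∉ T`. -/
noncomputable def transferMatrix (D : GraphOrientation G) (a : V →₀ ℕ) :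
    Matrix (Finset V) (Finset V) ℝ :=
  .of fun S T =>
    (-1) ^ #Tᶜ * coeff a (monomial (indicatorExp S + indicatorExp Tᶜ) 1 * graphPoly D)

lemma prod_sub_eq_sum_monomial_mul {R : Type*} [CommRing R] {ι : Type*} (i j : ι) :
    ∏ v : V, (X (v, i) - X (v, j) : MvPolynomial (V × ι) R) =
      ∑ S : Finset V, rename (·, i) (monomial (indicatorExp S) 1) *
        rename (·, j) (C ((-1) ^ #Sᶜ) * monomial (indicatorExp Sᶜ) 1) := by
  simp_rw [sub_eq_add_neg, Fintype.prod_add, prod_neg, monomial_indicatorExp, map_mul, map_prod,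
    rename_X, rename_C, map_pow, map_neg, map_one]

lemma graphPoly_boxProd_cycleOrientation (D : GraphOrientation G) {n : ℕ} (hn : 3 ≤ n) :
    graphPoly (D.boxProd (cycleOrientation n hn)) =
      ∑ p : Fin n → Finset V, ∏ i, rename (·, i) (C ((-1) ^ #(p (finRotate n i))ᶜ) *
        (monomial (indicatorExp (p i) + indicatorExp (p (finRotate n i))ᶜ) 1 * graphPoly D)) := by
  set σ := finRotate n
  have hcycle : ∏ v : V, rename (v, ·) (graphPoly (cycleOrientation n hn)) =
      ∏ i, ∏ v : V, (X (v, i) - X (v, σ.symm i)) := by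
    simp only [graphPoly_cycleOrientation, map_prod, map_sub, rename_X]
    rw [prod_comm, ← Equiv.prod_comp σ fun i => ∏ v : V, (X (v, i) - X (v, σ.symm i))]
    simp only [σ, Equiv.symm_apply_apply]
  rw [graphPoly_boxProd, hcycle]
  simp_rw [prod_sub_eq_sum_monomial_mul, Fintype.prod_sum, mul_sum, prod_mul_distrib]
  refine sum_congr rfl fun p _ => ?_
  rw [← Equiv.prod_comp σ fun i =>
    rename (·, σ.symm i) (C ((-1) ^ #(p i)ᶜ) * monomial (indicatorExp (p i)ᶜ) 1)]
  simp only [σ.symm_apply_apply, ← prod_mul_distrib, ← map_mul]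
  refine prod_congr rfl fun i _ => congrArg _ ?_
  rw [← one_mul (1 : ℝ), ← monomial_mul]
  ring_nf

lemma coeff_stackExp_graphPoly_boxProd (D : GraphOrientation G) {n : ℕ} (hn : 3 ≤ n)
    (d : Fin n → V →₀ ℕ) :
    coeff (stackExp d) (graphPoly (D.boxProd (cycleOrientation n hn))) =
      (List.ofFn fun i => transferMatrix D (d i)).prod.trace := by
  rw [graphPoly_boxProd_cycleOrientation, coeff_sum, trace_prod_ofFn (by omega)]
  simp only [coeff_stackExp_prod_rename, coeff_C_mul, transferMatrix, Matrix.of_apply]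

lemma transferMatrix_ne_zero (D : GraphOrientation G) {f a : V →₀ ℕ}
    (hf : coeff f (graphPoly D) ≠ 0) (hfa : ∀ v, f v ≤ a v) (haf : ∀ v, a v ≤ f v + 2) :
    transferMatrix D a ≠ 0 := by
  intro h
  let S : Finset V := {v | f v + 1 ≤ a v}
  let T : Finset V := {v | a v ≤ f v + 1}
  have hexp : indicatorExp S + indicatorExp Tᶜ + f = a := by
    ext v
    have hv := hfa v
    have hv' := haf v
    simp only [Finsupp.add_apply, indicatorExp_apply, mem_compl, S, T, mem_filter_univ]
    split_ifs <;> omega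
  have hST : (-1) ^ #Tᶜ *
      coeff a (monomial (indicatorExp S + indicatorExp Tᶜ) 1 * graphPoly D) = 0 :=
    congrFun₂ h S T
  rw [← hexp, coeff_monomial_mul, one_mul] at hST
  exact mul_ne_zero (pow_ne_zero _ (by norm_num)) hf hST

variable [DecidableRel G.Adj]

lemma transferMatrix_eq_smul_transpose (D : GraphOrientation G) {a b : V →₀ ℕ}
    (hab : ∀ v, a v + b v = G.degree v + 2) :
    transferMatrix D b =
      ((-1 : ℝ) ^ (a.degree + Fintype.card V)) • (transferMatrix D a).transpose := by
  ext T U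
  let c := coeff a (monomial (indicatorExp U + indicatorExp Tᶜ) 1 * graphPoly D)
  have hflip : coeff b (monomial (indicatorExp T + indicatorExp Uᶜ) 1 * graphPoly D) =
      (-1) ^ #D.edges * c := by
    refine coeff_monomial_mul_graphPoly_eq_neg_one_pow_mul D fun v => ?_
    simp only [Finsupp.add_apply, indicatorExp_apply, mem_compl, hab]
    split_ifs <;> omega
  change (-1) ^ #Uᶜ * coeff b _ = (-1) ^ (a.degree + Fintype.card V) * ((-1) ^ #Tᶜ * c)
  rw [hflip]
  by_cases hc : c = 0
  · simp only [hc, mul_zero]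
  have hdeg : a.degree = #U + #Tᶜ + #D.edges := by
    rw [degree_eq_of_coeff_monomial_mul_graphPoly_ne_zero D hc, map_add, degree_indicatorExp,
      degree_indicatorExp]
  have hsign : (-1 : ℝ) ^ (#Uᶜ + #D.edges) = (-1) ^ (a.degree + Fintype.card V + #Tᶜ) := by
    rw [neg_one_pow_congr, hdeg, ← card_add_card_compl U]
    grind
  rw [← mul_assoc, ← mul_assoc, ← pow_add, ← pow_add, hsign]

lemma exists_transferMatrix_ne_zero (D : GraphOrientation G) {m : ℕ} (hm : 2 ≤ m)
    (hdeg : ∀ v, G.degree v ≤ m) :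
    ∃ a b : V →₀ ℕ, (∀ v, a v + b v = G.degree v + 2) ∧ (∀ v, a v ≤ m) ∧ (∀ v, b v ≤ m) ∧
      transferMatrix D a ≠ 0 := by
  obtain ⟨f, hf⟩ := ne_zero_iff.1 (graphPoly_ne_zero D)
  have hfdeg := le_degree_of_coeff_graphPoly_ne_zero D hf
  let a : V →₀ ℕ := Finsupp.equivFunOnFinite.symm fun v => max (f v) (G.degree v + 2 - m)
  let b : V →₀ ℕ := Finsupp.equivFunOnFinite.symm fun v => G.degree v + 2 - a v
  have ha (v : V) : a v = max (f v) (G.degree v + 2 - m) := rfl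
  have hb (v : V) : b v = G.degree v + 2 - a v := rfl
  refine ⟨a, b, ?_, ?_, ?_, transferMatrix_ne_zero D hf ?_ ?_⟩ <;>
  · intro v
    have := hfdeg v
    have := hdeg v
    have := ha v
    have := hb v
    omega

lemma coeff_stackExp_ite_even_graphPoly_ne_zero (D : GraphOrientation G) {a b : V →₀ ℕ}
    (hab : ∀ v, a v + b v = G.degree v + 2) (ha : transferMatrix D a ≠ 0) {k : ℕ}
    (hk : 3 ≤ 2 * k) :
    coeff (stackExp fun i : Fin (2 * k) => if Even (i : ℕ) then a else b)
      (graphPoly (D.boxProd (cycleOrientation (2 * k) hk))) ≠ 0 := by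
  obtain ⟨k, rfl⟩ : ∃ l, k = l + 1 := ⟨k - 1, by omega⟩
  rw [coeff_stackExp_graphPoly_boxProd]
  simp only [apply_ite (transferMatrix D)]
  rw [prod_ofFn_ite_even, transferMatrix_eq_smul_transpose D hab, Matrix.mul_smul, smul_pow,
    Matrix.trace_smul, ← Matrix.conjTranspose_eq_transpose_of_trivial]
  exact smul_ne_zero (pow_ne_zero _ (pow_ne_zero _ (by norm_num)))
    (trace_pow_mul_conjTranspose_ne_zero ha k)

end Transfer

theorem ATNumber_boxProd_cycleGraph_le {V : Type*} [Fintype V] {G : SimpleGraph V}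
    [DecidableRel G.Adj] (hΔ : 2 ≤ G.maxDegree) {k : ℕ} (hk : 2 ≤ k) :
    ATNumber (G.boxProd (SimpleGraph.cycleGraph (2 * k))) ≤ G.maxDegree + 1 := by
  classical
  obtain ⟨D⟩ := exists_graphOrientation G
  obtain ⟨a, b, hab, ha, hb, hne⟩ := exists_transferMatrix_ne_zero D hΔ G.degree_le_maxDegree
  refine ATNumber_le_of_coeff_graphPoly_ne_zero _
    (coeff_stackExp_ite_even_graphPoly_ne_zero D hab hne (by omega)) ?_
  rintro ⟨v, i⟩
  rw [stackExp_apply]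
  split_ifs
  · exact ha v
  · exact hb v

lemma two_le_degree_of_mem_support_isCycle {V : Type*} {G : SimpleGraph V} {u v : V}
    [Fintype (G.neighborSet v)] {c : G.Walk u u} (hc : c.IsCycle) (hv : v ∈ c.support) :
    2 ≤ G.degree v := by
  rw [← hc.ncard_neighborSet_toSubgraph_eq_two hv, ← SimpleGraph.card_neighborSet_eq_degree,
    ← Nat.card_eq_fintype_card]
  exact Set.ncard_le_ncard (c.toSubgraph.neighborSet_subset v) (Set.toFinite _)

theorem stmt10_general {V : Type*} [Fintype V] [DecidableEq V] (G : SimpleGraph V)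
    [DecidableRel G.Adj] (hΔ : 2 ≤ G.maxDegree) (k : ℕ) (hk : 2 ≤ k) :
    ATNumber (G.boxProd (SimpleGraph.cycleGraph (2 * k))) ≤ G.maxDegree + 1 ∧
      G.maxDegree + 1 = (G.boxProd (SimpleGraph.cycleGraph (2 * k))).maxDegree - 1 ∧
      chNumber (G.boxProd (SimpleGraph.cycleGraph (2 * k))) ≤ G.maxDegree + 1 := by
  have hAT := ATNumber_boxProd_cycleGraph_le hΔ hk
  have : Nonempty V := by
    by_contra hV
    have := not_nonempty_iff.1 hV
    rw [G.maxDegree_of_subsingleton] at hΔ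
    omega
  have : Nonempty (Fin (2 * k)) := ⟨⟨0, by omega⟩⟩
  refine ⟨hAT, ?_, (chNumber_le_ATNumber _).trans hAT⟩
  rw [maxDegree_boxProd, maxDegree_cycleGraph (by omega)]
  rfl

/-- If every vertex of maximum degree of `G` lies on one of a
collection of pairwise vertex-disjoint cycles in `G`, then for every `k ≥ 2`,
`AT(G □ C_{2k}) ≤ Δ(G) + 1 = Δ(G □ C_{2k}) - 1`; in particular
`ch(G □ C_{2k}) ≤ Δ(G) + 1`. -/
theorem stmt10 {V : Type*} [Fintype V] [DecidableEq V] [Nonempty V]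
    (G : SimpleGraph V) [DecidableRel G.Adj]
    (cycles : Set (Σ v : V, G.Walk v v))
    (hcyc : ∀ c ∈ cycles, c.2.IsCycle)
    (hdisj : ∀ c ∈ cycles, ∀ c' ∈ cycles, c ≠ c' →
      ∀ v : V, v ∈ c.2.support → v ∉ c'.2.support)
    (hcover : ∀ v : V, G.degree v = G.maxDegree → ∃ c ∈ cycles, v ∈ c.2.support)
    (k : ℕ) (hk : 2 ≤ k) :
    ATNumber (G.boxProd (SimpleGraph.cycleGraph (2 * k))) ≤ G.maxDegree + 1 ∧
      G.maxDegree + 1 = (G.boxProd (SimpleGraph.cycleGraph (2 * k))).maxDegree - 1 ∧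
      chNumber (G.boxProd (SimpleGraph.cycleGraph (2 * k))) ≤ G.maxDegree + 1 := by
  obtain ⟨v, hv⟩ := G.exists_maximal_degree_vertex
  obtain ⟨c, hc, hvc⟩ := hcover v hv.symm
  exact stmt10_general G (hv ▸ two_le_degree_of_mem_support_isCycle (hcyc c hc) hvc) k hk
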